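/- Let H be a finite-dimensional Hopf algebra over a field k of positive characteristic, with antipode S and Sweedler power maps P^{(n)}. Then the indicator sequence of H is periodic: there exists an integer T > 0 such that Tr(S ∘ P^{(n+T)}) = Tr(S ∘ P^{(n)}) for all n ∈ ℕ, i.e. ν_{n+T}(H) = ν_n(H) for all n ≥ 1. -/

import Mathlib

open scoped TensorProduct

/-- The Sweedler power maps `P^(n) : H →ₗ[k] H` of a bialgebra: convolution powers of the
identity, defined by `P^(0) = u ∘ ε` and `P^(n+1) = m ∘ (P^(n) ⊗ id) ∘ Δ`. -/
noncomputable def sweedlerPower (k H : Type*) [CommSemiring k] [Semiring H]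
    [Bialgebra k H] : ℕ → H →ₗ[k] H
  | 0 => (Algebra.linearMap k H) ∘ₗ (Coalgebra.counit : H →ₗ[k] k)
  | n + 1 => (LinearMap.mul' k H) ∘ₗ
      (TensorProduct.map (sweedlerPower k H n) LinearMap.id) ∘ₗ
      (Coalgebra.comul : H →ₗ[k] H ⊗[k] H)

/-!
The paracyclic operator on `H^{⊗m}` has trace `Tr(S ∘ P^(m))`. A surjection from `H^{⊗(m+1)}` onto
`H^{⊗m}`, which identifies the target with the coinvariants of the diagonal action of `H`,
intertwines it with the rotation of tensor factors twisted by `S²`. Since `S²` has finite order by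
Radford's formula for `S⁴`, so does the paracyclic operator, and its trace is an algebraic integer.
In characteristic `p` all indicators therefore lie in the algebraic closure of `𝔽_p` in `k`. As
`P^(n)` is the orbit of an invertible operator, namely convolution with the identity, the indicators
satisfy a linear recurrence with nonzero constant term. Its coefficients can be taken in that
algebraic closure, where every unit integral over `𝔽_p` has finite order, and this makes the
sequence periodic.
-/

namespace HopfIndicator

open Coalgebra HopfAlgebra LinearMap TensorProduct WithConv

section Contraction

variable {R M N : Type*} [CommSemiring R] [AddCommMonoid M] [Module R M] [AddCommMonoid N]
  [Module R N]

/-- Contraction of the left factor of `M ⊗ N` with a functional on `M`. -/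
noncomputable def contractLeft (f : M →ₗ[R] R) : M ⊗[R] N →ₗ[R] N :=
  (TensorProduct.lid R N).toLinearMap ∘ₗ f.rTensor N

/-- Contraction of the right factor of `M ⊗ N` with a functional on `N`. -/
noncomputable def contractRight (f : N →ₗ[R] R) : M ⊗[R] N →ₗ[R] M :=
  (TensorProduct.rid R M).toLinearMap ∘ₗ f.lTensor M

@[simp] lemma contractLeft_tmul (f : M →ₗ[R] R) (x : M) (y : N) :
    contractLeft f (x ⊗ₜ[R] y) = f x • y := by
  simp [contractLeft]

@[simp] lemma contractRight_tmul (f : N →ₗ[R] R) (x : M) (y : N) :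
    contractRight f (x ⊗ₜ[R] y) = f y • x := by
  simp [contractRight]

lemma contractLeft_apply_eq_apply_contractRight (f : M →ₗ[R] R) (g : N →ₗ[R] R) (t : M ⊗[R] N) :
    f (contractRight g t) = g (contractLeft f t) := by
  have : f ∘ₗ contractRight g = g ∘ₗ contractLeft f := by
    ext; simp [mul_comm]
  exact LinearMap.congr_fun this t

variable {A B : Type*} [Semiring A] [Algebra R A] [Semiring B] [Algebra R B]

lemma contractLeft_mul_tmul (f : A →ₗ[R] R) (t : A ⊗[R] B) (a : A) (b : B) :
    contractLeft f (t * a ⊗ₜ[R] b) = contractLeft (f ∘ₗ mulRight R a) t * b := by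
  induction t with
  | zero => simp
  | add s t hs ht => simp only [add_mul, map_add, hs, ht]
  | tmul x y => simp

lemma contractRight_tmul_mul (f : B →ₗ[R] R) (a : A) (b : B) (t : A ⊗[R] B) :
    contractRight f (a ⊗ₜ[R] b * t) = a * contractRight (f ∘ₗ mulLeft R b) t := by
  induction t with
  | zero => simp
  | add s t hs ht => simp only [mul_add, map_add, hs, ht]
  | tmul x y => simp

lemma sum_basis_tmul_contractLeft {ι : Type*} [Fintype ι] (b : Module.Basis ι R M)
    (t : M ⊗[R] N) : ∑ i, b i ⊗ₜ[R] contractLeft (b.coord i) t = t := by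
  induction t with
  | zero => simp
  | add s t hs ht => simp only [map_add, tmul_add, Finset.sum_add_distrib, hs, ht]
  | tmul x y =>
    simp only [contractLeft_tmul, ← smul_tmul, ← sum_tmul, Module.Basis.coord_apply, b.sum_repr]

lemma sum_contractRight_tmul_basis {ι : Type*} [Fintype ι] (b : Module.Basis ι R N)
    (t : M ⊗[R] N) : ∑ i, contractRight (b.coord i) t ⊗ₜ[R] b i = t := by
  induction t with
  | zero => simp
  | add s t hs ht => simp only [map_add, add_tmul, Finset.sum_add_distrib, hs, ht]
  | tmul x y =>
    simp only [contractRight_tmul, smul_tmul, ← tmul_sum, Module.Basis.coord_apply, b.sum_repr]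

end Contraction

section Hit

variable {R C A : Type*} [CommSemiring R] [AddCommMonoid C] [Module R C] [Coalgebra R C]
  [Semiring A] [Algebra R A]

/-- The operator `x ↦ f(x₁) x₂` on a coalgebra: right multiplication by `f` in the action of the
dual algebra, usually written `x ↼ f`. -/
noncomputable def hitLeft (f : C →ₗ[R] R) : Module.End R C :=
  contractLeft f ∘ₗ comul

/-- The operator `x ↦ x₁ f(x₂)` on a coalgebra: left multiplication by `f` in the action of the
dual algebra, usually written `f ⇀ x`. -/
noncomputable def hitRight (f : C →ₗ[R] R) : Module.End R C :=
  contractRight f ∘ₗ comul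

variable (A) in
/-- A functional viewed as a map into the scalars of `A`, as an element of the convolution algebra.
Through it the dual algebra of `C` acts on every convolution algebra `Hom(C, A)`. -/
noncomputable def scalarConv (f : C →ₗ[R] R) : WithConv (C →ₗ[R] A) :=
  toConv (Algebra.linearMap R A ∘ₗ f)

lemma toConv_comp_hitLeft (F : C →ₗ[R] A) (f : C →ₗ[R] R) :
    toConv (F ∘ₗ hitLeft f) = scalarConv A f * toConv F := by
  have : F ∘ₗ contractLeft f = mul' R A ∘ₗ TensorProduct.map (Algebra.linearMap R A ∘ₗ f) F := by
    ext; simp [Algebra.smul_def]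
  rw [hitLeft, ← LinearMap.comp_assoc, this]
  rfl

lemma toConv_comp_hitRight (F : C →ₗ[R] A) (f : C →ₗ[R] R) :
    toConv (F ∘ₗ hitRight f) = toConv F * scalarConv A f := by
  have : F ∘ₗ contractRight f = mul' R A ∘ₗ TensorProduct.map F (Algebra.linearMap R A ∘ₗ f) := by
    ext; simp [Algebra.smul_def, Algebra.commutes]
  rw [hitRight, ← LinearMap.comp_assoc, this]
  rfl

lemma convMul_eq_comp_hitLeft (f g : C →ₗ[R] R) : toConv f * toConv g = toConv (g ∘ₗ hitLeft f) :=
  (toConv_comp_hitLeft g f).symm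

lemma convMul_eq_comp_hitRight (f g : C →ₗ[R] R) :
    toConv f * toConv g = toConv (f ∘ₗ hitRight g) :=
  (toConv_comp_hitRight f g).symm

lemma apply_hitRight (f g : C →ₗ[R] R) (x : C) : f (hitRight g x) = g (hitLeft f x) :=
  contractLeft_apply_eq_apply_contractRight f g (comul x)

@[simp] lemma hitLeft_counit : hitLeft (counit : C →ₗ[R] R) = 1 := by
  ext x
  simp [hitLeft, contractLeft, rTensor_counit_comul]

@[simp] lemma hitRight_counit : hitRight (counit : C →ₗ[R] R) = 1 := by
  ext x
  simp [hitRight, contractRight, lTensor_counit_comul]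

lemma hitLeft_sum {ι : Type*} (s : Finset ι) (f : ι → C →ₗ[R] R) :
    hitLeft (∑ i ∈ s, f i) = ∑ i ∈ s, hitLeft (f i) := by
  ext x
  simp [hitLeft, contractLeft, ← coe_rTensorHom]

lemma hitLeft_smul (r : R) (f : C →ₗ[R] R) : hitLeft (r • f) = r • hitLeft f := by
  ext x
  simp [hitLeft, contractLeft, rTensor_smul]

lemma comul_comp_hitLeft (f : C →ₗ[R] R) :
    comul ∘ₗ hitLeft f = (hitLeft f).rTensor C ∘ₗ comul := by
  have slide : comul ∘ₗ contractLeft f =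
      contractLeft f ∘ₗ (comul (R := R) (A := C)).lTensor C := by
    ext; simp
  have assoc_contract : contractLeft f ∘ₗ (TensorProduct.assoc R C C C).toLinearMap =
      (contractLeft f).rTensor C := by
    ext; simp [smul_tmul']
  rw [hitLeft, ← LinearMap.comp_assoc, slide, LinearMap.comp_assoc, ← coassoc,
    ← LinearMap.comp_assoc, assoc_contract, rTensor_comp, LinearMap.comp_assoc]

lemma comul_comp_hitRight (f : C →ₗ[R] R) :
    comul ∘ₗ hitRight f = (hitRight f).lTensor C ∘ₗ comul := by
  have slide : comul ∘ₗ contractRight f =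
      contractRight f ∘ₗ (comul (R := R) (A := C)).rTensor C := by
    ext; simp
  have contract_assoc : contractRight f = (contractRight f).lTensor C ∘ₗ
      (TensorProduct.assoc R C C C).toLinearMap := by
    ext; simp
  rw [hitRight, ← LinearMap.comp_assoc, slide, contract_assoc, lTensor_comp, LinearMap.comp_assoc,
    LinearMap.comp_assoc, LinearMap.comp_assoc, coassoc]

lemma commute_hitLeft_hitRight (f g : C →ₗ[R] R) : Commute (hitLeft f) (hitRight g) := by
  have slide : contractRight g ∘ₗ (hitLeft f).rTensor C = hitLeft f ∘ₗ contractRight g := by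
    ext; simp
  change hitLeft f ∘ₗ contractRight g ∘ₗ comul = (contractRight g ∘ₗ comul) ∘ₗ hitLeft f
  rw [LinearMap.comp_assoc, comul_comp_hitLeft, ← LinearMap.comp_assoc, ← LinearMap.comp_assoc,
    slide]

lemma hitLeft_convMul (f g : WithConv (C →ₗ[R] R)) :
    hitLeft (f * g).ofConv = hitLeft g.ofConv * hitLeft f.ofConv := by
  have slide : contractLeft (g.ofConv ∘ₗ hitLeft f.ofConv) =
      contractLeft g.ofConv ∘ₗ (hitLeft f.ofConv).rTensor C := by
    ext; simp
  change _ = (contractLeft g.ofConv ∘ₗ comul) ∘ₗ hitLeft f.ofConv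
  rw [LinearMap.comp_assoc, comul_comp_hitLeft, ← LinearMap.comp_assoc, ← slide]
  exact congrArg (fun h : WithConv (C →ₗ[R] R) ↦ hitLeft h.ofConv)
    (convMul_eq_comp_hitLeft f.ofConv g.ofConv)

lemma hitRight_convMul (f g : WithConv (C →ₗ[R] R)) :
    hitRight (f * g).ofConv = hitRight f.ofConv * hitRight g.ofConv := by
  have slide : contractRight (f.ofConv ∘ₗ hitRight g.ofConv) =
      contractRight f.ofConv ∘ₗ (hitRight g.ofConv).lTensor C := by
    ext; simp
  change _ = (contractRight f.ofConv ∘ₗ comul) ∘ₗ hitRight g.ofConv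
  rw [LinearMap.comp_assoc, comul_comp_hitRight, ← LinearMap.comp_assoc, ← slide]
  exact congrArg (fun h : WithConv (C →ₗ[R] R) ↦ hitRight h.ofConv)
    (convMul_eq_comp_hitRight f.ofConv g.ofConv)

lemma hitLeft_comp_hitRight (f g : C →ₗ[R] R) :
    hitLeft (f ∘ₗ hitRight g) = hitLeft g * hitLeft f := by
  rw [← hitLeft_convMul (toConv f) (toConv g), convMul_eq_comp_hitRight, ofConv_toConv]

lemma hitRight_comp_hitRight (f g : C →ₗ[R] R) :
    hitRight (f ∘ₗ hitRight g) = hitRight f * hitRight g := by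
  rw [← hitRight_convMul (toConv f) (toConv g), convMul_eq_comp_hitRight, ofConv_toConv]

lemma hitLeft_convPow (f : WithConv (C →ₗ[R] R)) (n : ℕ) :
    hitLeft (f ^ n).ofConv = hitLeft f.ofConv ^ n := by
  induction n with
  | zero => exact hitLeft_counit
  | succ n ih => rw [pow_succ, hitLeft_convMul, ih, pow_succ']

lemma hitRight_convPow (f : WithConv (C →ₗ[R] R)) (n : ℕ) :
    hitRight (f ^ n).ofConv = hitRight f.ofConv ^ n := by
  induction n with
  | zero => exact hitRight_counit
  | succ n ih => rw [pow_succ, hitRight_convMul, ih, pow_succ]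

lemma isOfFinOrder_hitLeft {f : WithConv (C →ₗ[R] R)} (hf : IsOfFinOrder f) :
    IsOfFinOrder (hitLeft f.ofConv) := by
  obtain ⟨n, hn, hfn⟩ := isOfFinOrder_iff_pow_eq_one.1 hf
  exact isOfFinOrder_iff_pow_eq_one.2
    ⟨n, hn, by rw [← hitLeft_convPow, hfn]; exact hitLeft_counit⟩

lemma isOfFinOrder_hitRight {f : WithConv (C →ₗ[R] R)} (hf : IsOfFinOrder f) :
    IsOfFinOrder (hitRight f.ofConv) := by
  obtain ⟨n, hn, hfn⟩ := isOfFinOrder_iff_pow_eq_one.1 hf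
  exact isOfFinOrder_iff_pow_eq_one.2
    ⟨n, hn, by rw [← hitRight_convPow, hfn]; exact hitRight_counit⟩

lemma commute_hitRight_of_comp_eq {f : C →ₗ[R] R} {φ : C →ₗc[R] C} (h : f ∘ₗ φ.toLinearMap = f) :
    Commute (φ.toLinearMap : Module.End R C) (hitRight f) := by
  have slide : contractRight f ∘ₗ TensorProduct.map φ.toLinearMap φ.toLinearMap =
      φ.toLinearMap ∘ₗ contractRight f := by
    ext x y
    simpa using congrArg (· • φ x) (LinearMap.congr_fun h y)
  change φ.toLinearMap ∘ₗ contractRight f ∘ₗ comul = (contractRight f ∘ₗ comul) ∘ₗ φ.toLinearMap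
  rw [LinearMap.comp_assoc, ← φ.map_comp_comul, ← LinearMap.comp_assoc, ← LinearMap.comp_assoc,
    slide]

lemma sum_basis_tmul_hitLeft {ι : Type*} [Fintype ι] (b : Module.Basis ι R C) (x : C) :
    ∑ i, b i ⊗ₜ[R] hitLeft (b.coord i) x = comul x :=
  sum_basis_tmul_contractLeft b (comul x)

lemma sum_hitRight_tmul_basis {ι : Type*} [Fintype ι] (b : Module.Basis ι R C) (x : C) :
    ∑ i, hitRight (b.coord i) x ⊗ₜ[R] b i = comul x :=
  sum_contractRight_tmul_basis b (comul x)

end Hit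

section Antipode

variable {R H B : Type*} [CommSemiring R] [Semiring H] [HopfAlgebra R H] [Semiring B] [Algebra R B]

lemma algHom_comp_antipode_convMul (χ : H →ₐ[R] B) :
    toConv (χ.toLinearMap ∘ₗ antipode R) * toConv χ.toLinearMap = 1 := by
  have h := algHom_comp_convMul_distrib χ (toConv (antipode R)) (toConv LinearMap.id)
  rw [antipode_mul_id] at h
  refine (WithConv.ext h).symm.trans (WithConv.ext ?_)
  ext; simp

lemma convMul_algHom_comp_antipode (χ : H →ₐ[R] B) :
    toConv χ.toLinearMap * toConv (χ.toLinearMap ∘ₗ antipode R) = 1 := by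
  have h := algHom_comp_convMul_distrib χ (toConv LinearMap.id) (toConv (antipode R))
  rw [id_mul_antipode] at h
  refine (WithConv.ext h).symm.trans (WithConv.ext ?_)
  ext; simp

lemma comul_comp_antipode :
    comul ∘ₗ antipode R =
      TensorProduct.map (antipode R) (antipode R) ∘ₗ
        (TensorProduct.comm R H H).toLinearMap ∘ₗ comul := by
  let inl : H →ₐ[R] H ⊗[R] H := Algebra.TensorProduct.includeLeft
  let inr : H →ₐ[R] H ⊗[R] H := Algebra.TensorProduct.includeRight
  have comul_eq : toConv (comul (R := R) (A := H)) =
      toConv inl.toLinearMap * toConv inr.toLinearMap := by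
    have : mul' R (H ⊗[R] H) ∘ₗ TensorProduct.map inl.toLinearMap inr.toLinearMap =
        LinearMap.id := by
      ext; simp [inl, inr]
    rw [LinearMap.convMul_def, ← LinearMap.comp_assoc, this, LinearMap.id_comp]
  have swap_eq : toConv (TensorProduct.map (antipode R) (antipode R) ∘ₗ
        (TensorProduct.comm R H H).toLinearMap ∘ₗ comul (R := R) (A := H)) =
      toConv (inr.toLinearMap ∘ₗ antipode R) * toConv (inl.toLinearMap ∘ₗ antipode R) := by
    have : mul' R (H ⊗[R] H) ∘ₗ
        TensorProduct.map (inr.toLinearMap ∘ₗ antipode R) (inl.toLinearMap ∘ₗ antipode R) =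
        TensorProduct.map (antipode R) (antipode R) ∘ₗ (TensorProduct.comm R H H).toLinearMap := by
      ext; simp [inl, inr]
    rw [← LinearMap.comp_assoc, ← this]
    rfl
  refine toConv_injective (left_inv_eq_right_inv ?_
    (convMul_algHom_comp_antipode (Bialgebra.comulAlgHom R H))).symm
  calc _ = toConv (inr.toLinearMap ∘ₗ antipode R) * (toConv (inl.toLinearMap ∘ₗ antipode R) *
        toConv inl.toLinearMap) * toConv inr.toLinearMap := by
        rw [swap_eq, mul_assoc, mul_assoc, mul_assoc, ← comul_eq]; rfl
    _ = 1 := by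
        rw [algHom_comp_antipode_convMul, mul_one, algHom_comp_antipode_convMul]

variable (R H) in
/-- The square of the antipode as an endomorphism of bialgebras. -/
noncomputable def antipodeSq : H →ₐc[R] H :=
  .ofAlgHom
    (.ofLinearMap (antipode R ∘ₗ antipode R) (by simp) (by simp [antipode_mul_antidistrib]))
    (by ext; simp)
    (AlgHom.toLinearMap_injective <| by
      change TensorProduct.map (antipode R ∘ₗ antipode R) (antipode R ∘ₗ antipode R) ∘ₗ comul =
        comul ∘ₗ antipode R ∘ₗ antipode R
      have : TensorProduct.map (antipode R ∘ₗ antipode R) (antipode R ∘ₗ antipode R) =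
          (TensorProduct.map (antipode R) (antipode R) ∘ₗ
            (TensorProduct.comm R H H).toLinearMap) ∘ₗ
          TensorProduct.map (antipode R) (antipode R) ∘ₗ
            (TensorProduct.comm R H H).toLinearMap := by
        ext; simp
      rw [← LinearMap.comp_assoc, comul_comp_antipode, LinearMap.comp_assoc,
        LinearMap.comp_assoc, comul_comp_antipode, this]
      simp only [LinearMap.comp_assoc])

@[simp] lemma antipodeSq_apply (x : H) : antipodeSq R H x = antipode R (antipode R x) := rfl

end Antipode

section LeftIntegral

variable {R H : Type*} [CommRing R] [Ring H] [HopfAlgebra R H]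

/-- A left integral on a Hopf algebra: a functional `l` with `x₁ l(x₂) = l(x) 1` for all `x`, that
is, a left integral in the dual algebra. -/
def IsLeftIntegral (l : H →ₗ[R] R) : Prop :=
  ∀ x, hitRight l x = algebraMap R H (l x)

section Existence

variable {ι : Type*} [Fintype ι]

lemma sum_antipodeSq_hitLeft_mul_antipode_basis (b : Module.Basis ι R H) (z : H) :
    ∑ i, antipodeSq R H (hitLeft (b.coord i) z) * antipode R (b i) =
      algebraMap R H (counit z) := by
  have h := mul_antipode_lTensor_comul_apply (R := R) z
  rw [← sum_basis_tmul_hitLeft b, map_sum, map_sum] at h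
  simpa [antipode_mul_antidistrib, Algebra.algebraMap_eq_smul_one] using congrArg (antipode R) h

lemma sum_antipode_basis_mul_antipodeSq_hitRight (b : Module.Basis ι R H) (z : H) :
    ∑ i, antipode R (b i) * antipodeSq R H (hitRight (b.coord i) z) =
      algebraMap R H (counit z) := by
  have h := mul_antipode_rTensor_comul_apply (R := R) z
  rw [← sum_hitRight_tmul_basis b, map_sum, map_sum] at h
  simpa [antipode_mul_antidistrib, Algebra.algebraMap_eq_smul_one] using congrArg (antipode R) h

lemma sum_comul_antipodeSq_hitLeft_mul (b : Module.Basis ι R H) (z : H) :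
    ∑ i, comul (antipodeSq R H (hitLeft (b.coord i) z)) * antipode R (b i) ⊗ₜ[R] 1 =
      1 ⊗ₜ[R] antipodeSq R H z := by
  have comul_term (i : ι) : comul (antipodeSq R H (hitLeft (b.coord i) z)) =
      TensorProduct.map (antipodeSq R H : H →ₗ[R] H) (antipodeSq R H : H →ₗ[R] H)
        ((hitLeft (b.coord i)).rTensor H (comul z)) := by
    rw [← CoalgHomClass.map_comp_comul_apply]
    exact congrArg _ (LinearMap.congr_fun (comul_comp_hitLeft (b.coord i)) z)
  have contract : ∑ i, mulRight R (antipode R (b i) ⊗ₜ[R] (1 : H)) ∘ₗ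
        TensorProduct.map (antipodeSq R H : H →ₗ[R] H) (antipodeSq R H : H →ₗ[R] H) ∘ₗ
        (hitLeft (b.coord i)).rTensor H =
      TensorProduct.mk R H H 1 ∘ₗ (antipodeSq R H : H →ₗ[R] H) ∘ₗ contractLeft counit := by
    ext x y
    simp [-antipodeSq_apply, ← sum_tmul, sum_antipodeSq_hitLeft_mul_antipode_basis b x,
      Algebra.algebraMap_eq_smul_one, smul_tmul]
  have h := LinearMap.congr_fun contract (comul z)
  simp only [LinearMap.sum_apply, LinearMap.comp_apply] at h
  simp only [comul_term]
  refine h.trans (congrArg (fun w ↦ 1 ⊗ₜ[R] antipodeSq R H w) ?_)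
  exact LinearMap.congr_fun hitLeft_counit z

lemma hitLeft_mul_antipodeSq (b : Module.Basis ι R H) (φ : H →ₗ[R] R) (y z : H) :
    hitLeft φ y * antipodeSq R H z =
      ∑ i, hitLeft (φ ∘ₗ mulRight R (antipode R (b i)))
        (y * antipodeSq R H (hitLeft (b.coord i) z)) := by
  calc hitLeft φ y * antipodeSq R H z
      = contractLeft φ (comul y * 1 ⊗ₜ[R] antipodeSq R H z) := by
        rw [contractLeft_mul_tmul, mulRight_one, LinearMap.comp_id]; rfl
    _ = ∑ i, contractLeft φ (comul (y * antipodeSq R H (hitLeft (b.coord i) z)) *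
          antipode R (b i) ⊗ₜ[R] 1) := by
        simp only [← sum_comul_antipodeSq_hitLeft_mul b, Finset.mul_sum, map_sum,
          Bialgebra.comul_mul, mul_assoc]
    _ = _ := by
        simp only [contractLeft_mul_tmul, mul_one]; rfl

lemma sum_hitLeft_mul_hitLeft_comp_mulRight (b : Module.Basis ι R H) (φ : H →ₗ[R] R) :
    ∑ i, hitLeft (b.coord i) * hitLeft (φ ∘ₗ mulRight R (antipode R (b i))) =
      φ 1 • (1 : Module.End R H) := by
  have sum_eq : ∑ i, (φ ∘ₗ mulRight R (antipode R (b i))) ∘ₗ hitRight (b.coord i) =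
      φ 1 • counit := by
    ext x
    have h := congrArg φ (mul_antipode_lTensor_comul_apply (R := R) x)
    rw [← sum_hitRight_tmul_basis b, map_sum, map_sum, map_sum] at h
    simpa [Algebra.algebraMap_eq_smul_one, mul_comm] using h
  calc _ = ∑ i, hitLeft ((φ ∘ₗ mulRight R (antipode R (b i))) ∘ₗ hitRight (b.coord i)) :=
        Finset.sum_congr rfl fun i _ ↦ (hitLeft_comp_hitRight _ _).symm
    _ = φ 1 • (1 : Module.End R H) := by
        rw [← hitLeft_sum, sum_eq, hitLeft_smul, hitLeft_counit]

/-- The functional `y ↦ Tr(x ↦ (y S²(x))₁ f((y S²(x))₂))`. It is a left integral for every `f`, and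
for some `f` it is nonzero. -/
noncomputable def traceIntegral (f : H →ₗ[R] R) : H →ₗ[R] R :=
  trace R H ∘ₗ mulLeft R (hitRight f) ∘ₗ mulRight R (antipodeSq R H : H →ₗ[R] H) ∘ₗ
    LinearMap.mul R H

lemma traceIntegral_apply (f : H →ₗ[R] R) (y : H) : traceIntegral f y =
    trace R H (hitRight f * (mulLeft R y ∘ₗ (antipodeSq R H : H →ₗ[R] H))) := rfl

lemma traceIntegral_hitLeft [Module.Free R H] [Module.Finite R H] (f φ : H →ₗ[R] R) (y : H) :
    traceIntegral f (hitLeft φ y) = φ 1 * traceIntegral f y := by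
  let b := Module.Free.chooseBasis R H
  let φ' (i : Module.Free.ChooseBasisIndex R H) := φ ∘ₗ mulRight R (antipode R (b i))
  have expand : mulLeft R (hitLeft φ y) ∘ₗ (antipodeSq R H : H →ₗ[R] H) =
      ∑ i, hitLeft (φ' i) * (mulLeft R y ∘ₗ (antipodeSq R H : H →ₗ[R] H)) *
        hitLeft (b.coord i) := by
    ext z
    rw [LinearMap.sum_apply]
    exact hitLeft_mul_antipodeSq b φ y z
  have cycle (i) (G : Module.End R H) :
      trace R H (hitRight f * (hitLeft (φ' i) * G * hitLeft (b.coord i))) =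
      trace R H (hitRight f * (hitLeft (b.coord i) * hitLeft (φ' i) * G)) := by
    rw [← mul_assoc, trace_mul_comm, ← mul_assoc, (commute_hitLeft_hitRight _ f).eq]
    simp only [mul_assoc]
  rw [traceIntegral_apply, traceIntegral_apply, expand, Finset.mul_sum, map_sum]
  simp only [cycle]
  rw [← map_sum, ← Finset.mul_sum, ← Finset.sum_mul, sum_hitLeft_mul_hitLeft_comp_mulRight,
    smul_one_mul, mul_smul_comm, map_smul, smul_eq_mul]

lemma isLeftIntegral_traceIntegral [Module.Free R H] [Module.Finite R H] (f : H →ₗ[R] R) :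
    IsLeftIntegral (traceIntegral f) := by
  intro y
  let b := Module.Free.chooseBasis R H
  refine b.ext_elem fun i ↦ ?_
  have h := traceIntegral_hitLeft f (b.coord i) y
  rw [← apply_hitRight] at h
  simpa [Algebra.algebraMap_eq_smul_one, mul_comm] using h

lemma sum_traceIntegral_basis (b : Module.Basis ι R H) :
    ∑ i, traceIntegral (b.coord i) (antipode R (b i)) = 1 := by
  have sum_eq : ∑ i, (mulLeft R (antipode R (b i)) ∘ₗ (antipodeSq R H : H →ₗ[R] H)) *
      hitRight (b.coord i) = counit.smulRight 1 := by
    ext z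
    rw [LinearMap.sum_apply, smulRight_apply, ← Algebra.algebraMap_eq_smul_one]
    exact sum_antipode_basis_mul_antipodeSq_hitRight b z
  have := Module.Free.of_basis b
  have := Module.Finite.of_basis b
  simp only [traceIntegral_apply, trace_mul_comm R (hitRight _)]
  rw [← map_sum, sum_eq, trace_smulRight, Bialgebra.counit_one]

end Existence

lemma exists_isLeftIntegral_ne_zero [Nontrivial R] [Module.Free R H] [Module.Finite R H] :
    ∃ l : H →ₗ[R] R, IsLeftIntegral l ∧ l ≠ 0 := by
  have b := Module.Free.chooseBasis R H
  by_contra! h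
  refine one_ne_zero (α := R) ?_
  rw [← sum_traceIntegral_basis b]
  exact Finset.sum_eq_zero fun i _ ↦ by
    rw [h _ (isLeftIntegral_traceIntegral (b.coord i)), LinearMap.zero_apply]

end LeftIntegral

section FrobeniusForm

variable {k A : Type*} [Field k] [Ring A] [Algebra k A]

/-- A Frobenius form on an algebra: a functional `l` for which the bilinear form `l (y * x)` has
zero right radical. -/
def IsFrobeniusForm (l : A →ₗ[k] k) : Prop :=
  ∀ x, (∀ y, l (y * x) = 0) → x = 0

variable {l : A →ₗ[k] k}

lemma IsFrobeniusForm.comp_mulRight_injective (hl : IsFrobeniusForm l) :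
    Function.Injective fun a ↦ l ∘ₗ mulRight k a := fun a b hab ↦
  sub_eq_zero.1 <| hl _ fun y ↦ by
    rw [mul_sub, map_sub, sub_eq_zero]
    exact LinearMap.congr_fun hab y

variable [FiniteDimensional k A]

lemma IsFrobeniusForm.exists_comp_mulRight_eq (hl : IsFrobeniusForm l) (f : A →ₗ[k] k) :
    ∃ a, l ∘ₗ mulRight k a = f := by
  let toDual : A →ₗ[k] Module.Dual k A := (LinearMap.mul k A).flip.compr₂ l
  have toDual_injective : Function.Injective toDual :=
    (injective_iff_map_eq_zero toDual).2 fun x hx ↦ hl x fun y ↦ LinearMap.congr_fun hx y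
  exact (injective_iff_surjective_of_finrank_eq_finrank
    Subspace.dual_finrank_eq.symm).1 toDual_injective f

lemma IsFrobeniusForm.exists_comp_mulLeft_eq (hl : IsFrobeniusForm l) (f : A →ₗ[k] k) :
    ∃ a, l ∘ₗ mulLeft k a = f := by
  let toDual : A →ₗ[k] Module.Dual k A := (LinearMap.mul k A).compr₂ l
  have toDual_injective : Function.Injective toDual := by
    refine (injective_iff_map_eq_zero toDual).2 fun x hx ↦
      (Module.forall_dual_apply_eq_zero_iff k x).1 fun φ ↦ ?_
    obtain ⟨a, rfl⟩ := hl.exists_comp_mulRight_eq φ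
    exact LinearMap.congr_fun hx a
  exact (injective_iff_surjective_of_finrank_eq_finrank
    Subspace.dual_finrank_eq.symm).1 toDual_injective f

lemma IsFrobeniusForm.exists_comp_mul_eq (hl : IsFrobeniusForm l) {N : A →ₗ[k] A}
    (hN : ∀ x, l ∘ₗ mulLeft k x = l ∘ₗ mulRight k (N x)) (f : A →ₗ[k] k) :
    ∃ a, l ∘ₗ mulLeft k a = f ∧ l ∘ₗ mulRight k a = f ∘ₗ N := by
  obtain ⟨a, rfl⟩ := hl.exists_comp_mulLeft_eq f
  exact ⟨a, rfl, LinearMap.ext fun x ↦ LinearMap.congr_fun (hN x) a⟩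

lemma IsFrobeniusForm.exists_nakayama (hl : IsFrobeniusForm l) :
    ∃ N : A →ₐ[k] A, ∀ x, l ∘ₗ mulLeft k x = l ∘ₗ mulRight k (N x) := by
  choose N hN using fun x ↦ hl.exists_comp_mulRight_eq (l ∘ₗ mulLeft k x)
  have apply_mul_N (x y : A) : l (y * N x) = l (x * y) := LinearMap.congr_fun (hN x) y
  have eq_of_apply_mul {a b : A} (h : ∀ y, l (y * a) = l (y * b)) : a = b :=
    hl.comp_mulRight_injective (LinearMap.ext h)
  let N_linear : A →ₗ[k] A :=
    { toFun := N
      map_add' := fun x x' ↦ eq_of_apply_mul fun y ↦ by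
        simp only [mul_add, map_add, apply_mul_N, add_mul]
      map_smul' := fun r x ↦ eq_of_apply_mul fun y ↦ by
        simp only [RingHom.id_apply, mul_smul_comm, map_smul, apply_mul_N, smul_mul_assoc] }
  refine ⟨.ofLinearMap N_linear (eq_of_apply_mul fun y ↦ ?_)
    (fun x x' ↦ eq_of_apply_mul fun y ↦ ?_), fun x ↦ (hN x).symm⟩
  · exact (apply_mul_N 1 y).trans (by rw [one_mul, mul_one])
  · calc l (y * N (x * x')) = l (x * (x' * y)) := by rw [apply_mul_N, mul_assoc]
      _ = l (x' * (y * N x)) := by rw [← apply_mul_N x, mul_assoc]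
      _ = l (y * (N x * N x')) := by rw [← apply_mul_N x', mul_assoc]

end FrobeniusForm

section Radford

lemma IsLeftIntegral.antipode_hitRight_comp_mulRight {R H : Type*} [CommRing R] [Ring H]
    [HopfAlgebra R H] {l : H →ₗ[R] R} (hl : IsLeftIntegral l) (x y : H) :
    antipode R (hitRight (l ∘ₗ mulRight R y) x) = hitRight (l ∘ₗ mulLeft R x) y := by
  let G : H →ₗ[R] H := contractRight l ∘ₗ mulRight R (comul y) ∘ₗ
    Algebra.TensorProduct.includeRight.toLinearMap
  have G_apply (z : H) : G z = hitRight (l ∘ₗ mulLeft R z) y := by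
    simp [G, contractRight_tmul_mul, hitRight]
  have id_mul_G : toConv LinearMap.id * toConv G = scalarConv H (l ∘ₗ mulRight R y) := by
    have : mul' R H ∘ₗ TensorProduct.map LinearMap.id G =
        contractRight l ∘ₗ mulRight R (comul y) := by
      ext x z
      simp [G, contractRight_tmul_mul]
    ext x
    refine (LinearMap.congr_fun this (comul x)).trans ?_
    simpa [hitRight, scalarConv] using hl (x * y)
  have h : toConv (antipode R ∘ₗ hitRight (l ∘ₗ mulRight R y)) = toConv G := by
    rw [toConv_comp_hitRight, ← id_mul_G, ← mul_assoc, antipode_mul_id, one_mul]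
  rw [← G_apply]
  exact LinearMap.congr_fun (toConv_injective h) x

lemma hitLeft_comp_mulRight {R H : Type*} [CommRing R] [Ring H] [HopfAlgebra R H]
    {l : H →ₗ[R] R} {g : H} (hg : ∀ x, hitLeft l x = l x • g) (x y : H) :
    hitLeft (l ∘ₗ mulRight R y) x = g * antipode R (hitLeft (l ∘ₗ mulLeft R x) y) := by
  let F : H →ₗ[R] H := contractLeft l ∘ₗ mulLeft R (comul x) ∘ₗ
    Algebra.TensorProduct.includeLeft.toLinearMap
  have F_apply (z : H) : F z = hitLeft (l ∘ₗ mulRight R z) x := by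
    simp [F, contractLeft_mul_tmul, hitLeft]
  have F_mul_id : toConv F * toConv LinearMap.id = toConv ((l ∘ₗ mulLeft R x).smulRight g) := by
    have : mul' R H ∘ₗ TensorProduct.map F LinearMap.id =
        contractLeft l ∘ₗ mulLeft R (comul x) := by
      ext z w
      simp [F, contractLeft_mul_tmul]
    ext z
    refine (LinearMap.congr_fun this (comul z)).trans ?_
    simpa [hitLeft] using hg (x * z)
  have h : toConv F = toConv (mulLeft R g ∘ₗ antipode R ∘ₗ hitLeft (l ∘ₗ mulLeft R x)) := by
    have : mul' R H ∘ₗ TensorProduct.map ((l ∘ₗ mulLeft R x).smulRight g) (antipode R) =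
        mulLeft R g ∘ₗ antipode R ∘ₗ contractLeft (l ∘ₗ mulLeft R x) := by
      ext z w
      simp
    rw [← mul_one (toConv F), ← id_mul_antipode, ← mul_assoc, F_mul_id]
    exact congrArg (fun G ↦ toConv (G ∘ₗ comul)) this
  rw [← F_apply]
  exact LinearMap.congr_fun (toConv_injective h) y

variable {k H : Type*} [Field k] [Ring H] [HopfAlgebra k H] {l : H →ₗ[k] k}

lemma IsLeftIntegral.apply_mul_hitLeft_eq_zero (hl : IsLeftIntegral l) {y : H}
    (hy : ∀ x, l (x * y) = 0) (φ : H →ₗ[k] k) (x : H) : l (x * hitLeft φ y) = 0 := by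
  have comp_mulRight : l ∘ₗ mulRight k y = 0 := LinearMap.ext hy
  have h := hl.antipode_hitRight_comp_mulRight x y
  rw [comp_mulRight, hitRight, contractRight, lTensor_zero] at h
  change (l ∘ₗ mulLeft k x) (hitLeft φ y) = 0
  rw [← apply_hitRight, ← h]
  simp

variable [FiniteDimensional k H]

lemma IsLeftIntegral.counit_eq_zero (hl : IsLeftIntegral l) (hl0 : l ≠ 0) {y : H}
    (hy : ∀ x, l (x * y) = 0) : counit (R := k) y = 0 := by
  have b := Module.finBasis k H
  have h := mul_antipode_rTensor_comul_apply (R := k) y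
  rw [← sum_basis_tmul_hitLeft b, map_sum, map_sum] at h
  obtain ⟨x, hx⟩ := DFunLike.ne_iff.1 hl0
  have : l (x * algebraMap k H (counit y)) = 0 := by
    rw [← h, Finset.mul_sum, map_sum]
    refine Finset.sum_eq_zero fun i _ ↦ ?_
    rw [rTensor_tmul, mul'_apply, ← mul_assoc]
    exact hl.apply_mul_hitLeft_eq_zero hy _ _
  rw [← Algebra.commutes, ← Algebra.smul_def, map_smul, smul_eq_mul] at this
  exact (mul_eq_zero.1 this).resolve_right hx

lemma IsLeftIntegral.isFrobeniusForm (hl : IsLeftIntegral l) (hl0 : l ≠ 0) :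
    IsFrobeniusForm l := by
  refine fun y hy ↦ (Module.forall_dual_apply_eq_zero_iff k y).1 fun φ ↦ ?_
  have h := hl.counit_eq_zero hl0 (hl.apply_mul_hitLeft_eq_zero hy φ)
  rwa [← apply_hitRight, hitRight_counit] at h

lemma IsLeftIntegral.eq_smul (hl : IsLeftIntegral l) (hl0 : l ≠ 0) {m : H →ₗ[k] k}
    (hm : IsLeftIntegral m) : ∃ c : k, m = c • l := by
  have hF := hl.isFrobeniusForm hl0
  obtain ⟨a, rfl⟩ := hF.exists_comp_mulRight_eq m
  obtain ⟨x, hx⟩ := hF.exists_comp_mulLeft_eq counit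
  have h := hl.antipode_hitRight_comp_mulRight x a
  rw [hm x, hx, hitRight_counit, Algebra.algebraMap_eq_smul_one, map_smul, antipode_one] at h
  refine ⟨(l ∘ₗ mulRight k a) x, LinearMap.ext fun y ↦ ?_⟩
  conv_lhs => rw [← Module.End.one_apply (R := k) a, ← h]
  simp

lemma IsLeftIntegral.exists_comodulus (hl : IsLeftIntegral l) (hl0 : l ≠ 0) :
    ∃ g : H, IsGroupLikeElem k g ∧ ∀ x, hitLeft l x = l x • g := by
  obtain ⟨x, hx⟩ : ∃ x, l x = 1 := by
    obtain ⟨x, hx⟩ := DFunLike.ne_iff.1 hl0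
    exact ⟨(l x)⁻¹ • x, by simpa using inv_mul_cancel₀ hx⟩
  have hitLeft_eq (y : H) : hitLeft l y = l y • hitLeft l x := by
    rw [← sub_eq_zero]
    refine (Module.forall_dual_apply_eq_zero_iff k _).1 fun φ ↦ ?_
    have hφ : IsLeftIntegral (l ∘ₗ hitRight φ) := by
      intro z
      rw [hitRight_comp_hitRight]
      exact hl (hitRight φ z)
    obtain ⟨c, hc⟩ := hl.eq_smul hl0 hφ
    have φ_hitLeft (z : H) : φ (hitLeft l z) = c * l z := by
      rw [← apply_hitRight]
      exact LinearMap.congr_fun hc z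
    simp [φ_hitLeft, hx, mul_comm]
  refine ⟨hitLeft l x, ⟨?_, ?_⟩, hitLeft_eq⟩
  · rw [← apply_hitRight, hitRight_counit, Module.End.one_apply, hx]
  · have : (hitLeft l).rTensor H = TensorProduct.mk k H H (hitLeft l x) ∘ₗ contractLeft l := by
      ext a b
      simp [hitLeft_eq a, smul_tmul]
    refine (LinearMap.congr_fun (comul_comp_hitLeft l) x).trans ?_
    exact LinearMap.congr_fun this (comul x)

lemma IsLeftIntegral.nakayama_apply (hl : IsLeftIntegral l) (hl0 : l ≠ 0) {N : H →ₗ[k] H}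
    (hN : ∀ x, l ∘ₗ mulLeft k x = l ∘ₗ mulRight k (N x)) (x : H) :
    N x = antipodeSq k H (hitRight (counit ∘ₗ N) x) := by
  obtain ⟨y, hy, comp_N⟩ := (hl.isFrobeniusForm hl0).exists_comp_mul_eq hN counit
  rw [antipodeSq_apply, ← comp_N, hl.antipode_hitRight_comp_mulRight, hN,
    hl.antipode_hitRight_comp_mulRight, hy, hitRight_counit, Module.End.one_apply]

lemma IsLeftIntegral.hitLeft_nakayama (hl : IsLeftIntegral l) (hl0 : l ≠ 0) {N : H →ₗ[k] H}
    (hN : ∀ x, l ∘ₗ mulLeft k x = l ∘ₗ mulRight k (N x)) {g : H}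
    (hg : ∀ x, hitLeft l x = l x • g) (x : H) :
    hitLeft (counit ∘ₗ N) x = g * antipodeSq k H (N x) * antipode k g := by
  obtain ⟨y, hy, comp_N⟩ := (hl.isFrobeniusForm hl0).exists_comp_mul_eq hN counit
  rw [← comp_N, hitLeft_comp_mulRight hg, hN, hitLeft_comp_mulRight hg, hy, hitLeft_counit,
    Module.End.one_apply, antipode_mul_antidistrib, antipodeSq_apply, mul_assoc]

end Radford

section AntipodeOrder

lemma isOfFinOrder_right_of_mul {M : Type*} [Monoid M] {x y : M} (hxy : Commute x y)
    (hx : IsOfFinOrder x) (h : IsOfFinOrder (x * y)) : IsOfFinOrder y := by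
  obtain ⟨u, rfl⟩ := hx.isUnit
  have hu : IsOfFinOrder (↑u⁻¹ : M) :=
    Units.isOfFinOrder_val.2 (Units.isOfFinOrder_val.1 hx).inv
  rw [← u.inv_mul_cancel_left y]
  exact ((Commute.refl (u : M)).mul_right hxy).units_inv_left.isOfFinOrder_mul hu h

section Character

variable {R H B : Type*} [CommSemiring R] [Semiring H] [HopfAlgebra R H] [CommSemiring B]
  [Algebra R B]

/-- The convolution inverse `χ ∘ S` of a character `χ` of a Hopf algebra. -/
noncomputable def characterInv (χ : H →ₐ[R] B) : H →ₐ[R] B :=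
  .ofLinearMap (χ.toLinearMap ∘ₗ antipode R) (by simp)
    (by simp [antipode_mul_antidistrib, mul_comm])

lemma character_comp_antipodeSq (χ : H →ₐ[R] B) :
    χ.toLinearMap ∘ₗ (antipodeSq R H : H →ₗ[R] H) = χ.toLinearMap :=
  toConv_injective (left_inv_eq_right_inv (algHom_comp_antipode_convMul (characterInv χ))
    (algHom_comp_antipode_convMul χ))

lemma isUnit_character (χ : H →ₐ[R] B) : IsUnit (toConv χ) :=
  ⟨⟨toConv χ, toConv (characterInv χ),
    WithConv.ext (AlgHom.toLinearMap_injective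
      (congrArg WithConv.ofConv (convMul_algHom_comp_antipode χ))),
    WithConv.ext (AlgHom.toLinearMap_injective
      (congrArg WithConv.ofConv (algHom_comp_antipode_convMul χ)))⟩, rfl⟩

end Character

lemma isOfFinOrder_character {R H K : Type*} [CommRing R] [Ring H] [HopfAlgebra R H]
    [Module.Free R H] [Module.Finite R H] [CommRing K] [IsDomain K] [Algebra R K]
    (χ : H →ₐ[R] K) : IsOfFinOrder (toConv χ.toLinearMap) := by
  have : Finite (WithConv (H →ₐ[R] K)) := .of_equiv _ (WithConv.equiv _).symm
  obtain ⟨n, hn, hχ⟩ := isOfFinOrder_iff_pow_eq_one.1 (isUnit_character χ).isOfFinOrder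
  refine isOfFinOrder_iff_pow_eq_one.2 ⟨n, hn, ?_⟩
  exact (AlgHom.toLinearMap_convPow (toConv χ) n).symm.trans
    (congrArg (fun ψ : WithConv (H →ₐ[R] K) ↦ toConv ψ.ofConv.toLinearMap) hχ)

section GroupLikeConj

variable {R H : Type*} [CommSemiring R] [Semiring H] [HopfAlgebra R H]

/-- Conjugation `x ↦ g x S(g)` by a group-like element, as an endomorphism of coalgebras. -/
noncomputable def groupLikeConj (g : GroupLike R H) : H →ₗc[R] H where
  toLinearMap := mulLeft R (g : H) ∘ₗ mulRight R (antipode R (g : H))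
  counit_comp := by ext x; simp
  map_comp_comul := by
    have : TensorProduct.map (mulLeft R (g : H) ∘ₗ mulRight R (antipode R (g : H)))
        (mulLeft R (g : H) ∘ₗ mulRight R (antipode R (g : H))) =
        mulLeft R ((g : H) ⊗ₜ[R] (g : H)) ∘ₗ
          mulRight R (antipode R (g : H) ⊗ₜ[R] antipode R (g : H)) := by
      ext x y; simp
    ext x
    rw [this]
    simp

lemma groupLikeConj_apply (g : GroupLike R H) (x : H) :
    groupLikeConj g x = g * (x * antipode R (g : H)) := rfl

lemma character_comp_groupLikeConj {B : Type*} [CommSemiring B] [Algebra R B] (χ : H →ₐ[R] B)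
    (g : GroupLike R H) : χ.toLinearMap ∘ₗ (groupLikeConj g).toLinearMap = χ.toLinearMap := by
  ext x
  change χ (g * (x * antipode R (g : H))) = χ x
  have : χ (g * antipode R (g : H)) = 1 := by simp
  rw [map_mul, map_mul, mul_left_comm, ← map_mul, this, mul_one]

lemma commute_groupLikeConj_antipodeSq (g : GroupLike R H) :
    Commute ((groupLikeConj g).toLinearMap : Module.End R H) (antipodeSq R H : H →ₗ[R] H) := by
  ext x
  change groupLikeConj g (antipodeSq R H x) = antipodeSq R H (groupLikeConj g x)
  simp [groupLikeConj_apply, antipode_mul_antidistrib, mul_assoc]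

end GroupLikeConj

lemma isOfFinOrder_groupLikeConj {R H : Type*} [CommRing R] [IsDomain R] [Ring H]
    [HopfAlgebra R H] [Module.IsTorsionFree R H] [Module.Finite R H] (g : GroupLike R H) :
    IsOfFinOrder ((groupLikeConj g).toLinearMap : Module.End R H) := by
  have : Finite (GroupLike R H) := (linearIndep_groupLikeVal (R := R) (A := H)).finite
  let conj : GroupLike R H →* Module.End R H :=
    { toFun := fun g ↦ (groupLikeConj g).toLinearMap
      map_one' := by ext x; simp [groupLikeConj]
      map_mul' := fun g h ↦ by
        ext x
        simp [groupLikeConj, antipode_mul_antidistrib, mul_assoc] }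
  exact conj.isOfFinOrder (isOfFinOrder_of_finite g)

variable {k : Type*} (H : Type*) [Field k] [Ring H] [HopfAlgebra k H] [FiniteDimensional k H]

variable (k) in
/-- Radford's formula for `S⁴`: the modular character `α` and the comodulus `g` arise from two
expressions for the Nakayama automorphism of a left integral. -/
lemma exists_radford_formula : ∃ (α : H →ₐ[k] k) (g : GroupLike k H),
    hitLeft α.toLinearMap = (groupLikeConj g).toLinearMap *
      ((antipodeSq k H : H →ₗ[k] H) * (antipodeSq k H : H →ₗ[k] H)) * hitRight α.toLinearMap := by
  obtain ⟨l, hl, hl0⟩ := exists_isLeftIntegral_ne_zero (R := k) (H := H)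
  obtain ⟨N, hN⟩ := (hl.isFrobeniusForm hl0).exists_nakayama
  obtain ⟨g, hg, hgl⟩ := hl.exists_comodulus hl0
  refine ⟨(Bialgebra.counitAlgHom k H).comp N, ⟨g, hg⟩, LinearMap.ext fun x ↦ ?_⟩
  refine (hl.hitLeft_nakayama hl0 (N := N.toLinearMap) hN hgl x).trans ?_
  rw [hl.nakayama_apply hl0 (N := N.toLinearMap) hN x, mul_assoc]
  rfl

variable (k) in
theorem isOfFinOrder_antipodeSq :
    IsOfFinOrder ((antipodeSq k H : H →ₗ[k] H) : Module.End k H) := by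
  obtain ⟨α, g, radford⟩ := exists_radford_formula k H
  set s : Module.End k H := (antipodeSq k H : H →ₗ[k] H)
  set c : Module.End k H := (groupLikeConj g).toLinearMap
  set r : Module.End k H := hitRight α.toLinearMap
  have hcs : Commute c s := commute_groupLikeConj_antipodeSq g
  have hcr : Commute c r := commute_hitRight_of_comp_eq (character_comp_groupLikeConj α g)
  have hsr : Commute s r :=
    commute_hitRight_of_comp_eq (φ := (antipodeSq k H : H →ₗc[k] H)) (character_comp_antipodeSq α)
  have hα := isOfFinOrder_character α
  have hc : IsOfFinOrder c := isOfFinOrder_groupLikeConj g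
  have hr : IsOfFinOrder r := isOfFinOrder_hitRight hα
  have hrc_ss : Commute (r * c) (s * s) :=
    (hsr.symm.mul_left hcs).mul_right (hsr.symm.mul_left hcs)
  have h : IsOfFinOrder ((r * c) * (s * s)) := by
    have : r * c * (s * s) = hitLeft α.toLinearMap := by
      rw [radford, mul_assoc, (hcr.mul_left (hsr.mul_left hsr)).eq]
    rw [this]
    exact isOfFinOrder_hitLeft hα
  have hss := isOfFinOrder_right_of_mul hrc_ss (hcr.symm.isOfFinOrder_mul hr hc) h
  rw [← pow_two] at hss
  exact hss.of_pow two_ne_zero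

end AntipodeOrder

section TensorPower

variable {R A : Type*} [CommSemiring R] [Semiring A] [Algebra R A] {m : ℕ}

lemma tensorPower_hom_ext {V : Type*} [AddCommMonoid V] [Module R V] {f g : ⨂[R]^(m + 1) A →ₗ[R] V}
    (h : ∀ (b : Fin m → A) (a : A), f (PiTensorProduct.tprod R (Fin.snoc b a)) =
      g (PiTensorProduct.tprod R (Fin.snoc b a))) : f = g :=
  PiTensorProduct.ext <| MultilinearMap.ext fun b ↦ by
    simpa only [Fin.snoc_init_self, compMultilinearMap_apply] using h (Fin.init b) (b (Fin.last m))

/-- The algebra embedding `w ↦ w ⊗ 1` of `A^{⊗m}` into `A^{⊗(m+1)}`. -/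
noncomputable def snocOne : ⨂[R]^m A →ₐ[R] ⨂[R]^(m + 1) A :=
  PiTensorProduct.liftAlgHom
    ((applyₗ (1 : A)).compMultilinearMap
      (PiTensorProduct.tprod R (s := fun _ : Fin (m + 1) ↦ A)).curryRight)
    (by
      rw [PiTensorProduct.one_def]
      refine congrArg (PiTensorProduct.tprod R) (funext fun i ↦ ?_)
      cases i using Fin.lastCases <;> simp)
    (fun x y ↦ by
      simp only [compMultilinearMap_apply, MultilinearMap.curryRight_apply, applyₗ_apply_apply,
        PiTensorProduct.tprod_mul_tprod]
      refine congrArg (PiTensorProduct.tprod R) (funext fun i ↦ ?_)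
      cases i using Fin.lastCases <;> simp)

/-- The algebra embedding `w ↦ 1 ⊗ w` of `A^{⊗m}` into `A^{⊗(m+1)}`. -/
noncomputable def consOne : ⨂[R]^m A →ₐ[R] ⨂[R]^(m + 1) A :=
  PiTensorProduct.liftAlgHom
    ((PiTensorProduct.tprod R (s := fun _ : Fin (m + 1) ↦ A)).curryLeft 1)
    (by
      rw [PiTensorProduct.one_def]
      refine congrArg (PiTensorProduct.tprod R) (funext fun i ↦ ?_)
      cases i using Fin.cases <;> simp)
    (fun x y ↦ by
      simp only [MultilinearMap.curryLeft_apply, PiTensorProduct.tprod_mul_tprod]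
      refine congrArg (PiTensorProduct.tprod R) (funext fun i ↦ ?_)
      cases i using Fin.cases <;> simp)

@[simp] lemma snocOne_tprod (b : Fin m → A) :
    snocOne (PiTensorProduct.tprod R b) = PiTensorProduct.tprod R (Fin.snoc b (1 : A)) := by
  simp [snocOne]

@[simp] lemma consOne_tprod (b : Fin m → A) :
    consOne (PiTensorProduct.tprod R b) = PiTensorProduct.tprod R (Fin.cons (1 : A) b) := by
  simp [consOne]

/-- The algebra embedding of `A` as the `i`-th factor of `A^{⊗m}`. -/
noncomputable def single (i : Fin m) : A →ₐ[R] ⨂[R]^m A :=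
  PiTensorProduct.singleAlgHom (A := fun _ ↦ A) i

lemma single_apply (i : Fin m) (a : A) :
    single i a = PiTensorProduct.tprod R (Pi.mulSingle i a) := rfl

lemma snocOne_tprod_mul_single_last (b : Fin m → A) (a : A) :
    snocOne (PiTensorProduct.tprod R b) * single (Fin.last m) a =
      PiTensorProduct.tprod R (Fin.snoc b a) := by
  rw [snocOne_tprod, single_apply, PiTensorProduct.tprod_mul_tprod]
  refine congrArg (PiTensorProduct.tprod R) (funext fun i ↦ ?_)
  cases i using Fin.lastCases <;> simp [(Fin.castSucc_lt_last _).ne]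

lemma consOne_tprod_mul_single_zero (b : Fin m → A) (a : A) :
    consOne (PiTensorProduct.tprod R b) * single 0 a =
      PiTensorProduct.tprod R (Fin.cons a b) := by
  rw [consOne_tprod, single_apply, PiTensorProduct.tprod_mul_tprod]
  refine congrArg (PiTensorProduct.tprod R) (funext fun i ↦ ?_)
  cases i using Fin.cases <;> simp [Fin.succ_ne_zero]

lemma commute_snocOne_single_last (w : ⨂[R]^m A) (a : A) :
    Commute (snocOne w) (single (Fin.last m) a) := by
  induction w using PiTensorProduct.induction_on with
  | smul_tprod r b =>
    rw [map_smul]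
    refine Commute.smul_left ?_ r
    rw [commute_iff_eq, snocOne_tprod_mul_single_last, snocOne_tprod, single_apply,
      PiTensorProduct.tprod_mul_tprod]
    refine congrArg (PiTensorProduct.tprod R) (funext fun i ↦ ?_)
    cases i using Fin.lastCases <;> simp [(Fin.castSucc_lt_last _).ne]
  | add x y hx hy => simpa only [map_add] using hx.add_left hy

lemma snocOne_mul_single_last_mul (x y : ⨂[R]^m A) (a c : A) :
    snocOne x * single (Fin.last m) a * (snocOne y * single (Fin.last m) c) =
      snocOne (x * y) * single (Fin.last m) (a * c) := by
  rw [map_mul, map_mul, mul_assoc, mul_assoc, ← mul_assoc (single _ a),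
    ← (commute_snocOne_single_last y a).eq, mul_assoc]

lemma snocOne_comp_single (i : Fin m) :
    snocOne.comp (single i) = single (R := R) (A := A) i.castSucc := by
  ext a
  rw [AlgHom.comp_apply, single_apply, single_apply, snocOne_tprod]
  refine congrArg (PiTensorProduct.tprod R) (funext fun j ↦ ?_)
  cases j using Fin.lastCases <;> simp [Pi.mulSingle_apply, (Fin.castSucc_lt_last i).ne']

lemma consOne_comp_single (i : Fin m) :
    consOne.comp (single i) = single (R := R) (A := A) i.succ := by
  ext a
  rw [AlgHom.comp_apply, single_apply, single_apply, consOne_tprod]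
  refine congrArg (PiTensorProduct.tprod R) (funext fun j ↦ ?_)
  cases j using Fin.cases <;> simp [Pi.mulSingle_apply, (Fin.succ_ne_zero i).symm]

lemma consOne_comp_snocOne :
    (consOne.comp snocOne : ⨂[R]^m A →ₐ[R] ⨂[R]^(m + 2) A) = snocOne.comp consOne := by
  refine PiTensorProduct.algHom_ext fun i ↦ ?_
  change (consOne.comp snocOne).comp (single i) = (snocOne.comp consOne).comp (single i)
  rw [AlgHom.comp_assoc, AlgHom.comp_assoc, snocOne_comp_single, consOne_comp_single,
    consOne_comp_single, snocOne_comp_single, Fin.succ_castSucc]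

variable (R A m) in
/-- The `m`-fold multiplication `A^{⊗m} → A`. -/
noncomputable def multiMul : ⨂[R]^m A →ₗ[R] A :=
  PiTensorProduct.lift (MultilinearMap.mkPiAlgebraFin R m A)

@[simp] lemma multiMul_tprod (b : Fin m → A) :
    multiMul R A m (PiTensorProduct.tprod R b) = (List.ofFn b).prod := by
  simp [multiMul]

lemma multiMul_consOne (w : ⨂[R]^m A) : multiMul R A (m + 1) (consOne w) = multiMul R A m w := by
  have : multiMul R A (m + 1) ∘ₗ consOne.toLinearMap = multiMul R A m := by
    ext b
    simp
  exact LinearMap.congr_fun this w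

lemma multiMul_snocOne_mul_single_last (w : ⨂[R]^m A) (a : A) :
    multiMul R A (m + 1) (snocOne w * single (Fin.last m) a) = multiMul R A m w * a := by
  have : multiMul R A (m + 1) ∘ₗ mulRight R (single (Fin.last m) a) ∘ₗ snocOne.toLinearMap =
      mulRight R a ∘ₗ multiMul R A m := by
    ext b
    simp only [compMultilinearMap_apply, LinearMap.comp_apply, AlgHom.toLinearMap_apply,
      mulRight_apply, snocOne_tprod_mul_single_last, multiMul_tprod, List.ofFn_succ', Fin.snoc_last,
      Fin.snoc_castSucc, List.concat_eq_append, List.prod_append, List.prod_singleton]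
  exact LinearMap.congr_fun this w

/-- The rotation `b₁ ⊗ ⋯ ⊗ bₘ ⊗ a ↦ φ(a) ⊗ b₁ ⊗ ⋯ ⊗ bₘ` of `A^{⊗(m+1)}` twisted by `φ`. -/
noncomputable def twistedRotation (φ : Module.End R A) (m : ℕ) : Module.End R (⨂[R]^(m + 1) A) :=
  PiTensorProduct.map (fun i : Fin (m + 1) ↦ if i = 0 then φ else LinearMap.id) ∘ₗ
    (PiTensorProduct.reindex R (fun _ ↦ A) (Equiv.addRight 1)).toLinearMap

lemma twistedRotation_tprod (φ : Module.End R A) (b : Fin (m + 1) → A) :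
    twistedRotation φ m (PiTensorProduct.tprod R b) =
      PiTensorProduct.tprod R fun i ↦ (if i = 0 then φ else LinearMap.id) (b (i - 1)) := by
  simp [twistedRotation, sub_eq_add_neg]

lemma succ_sub_one_eq_castSucc (i : Fin m) : i.succ - 1 = i.castSucc := by
  rw [← Fin.coeSucc_eq_succ, add_sub_cancel_right]

lemma zero_sub_one_eq_last : (0 - 1 : Fin (m + 1)) = Fin.last m := by
  rw [← Fin.last_add_one, add_sub_cancel_right]

lemma twistedRotation_tprod_snoc (φ : Module.End R A) (b : Fin m → A) (a : A) :
    twistedRotation φ m (PiTensorProduct.tprod R (Fin.snoc b a)) =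
      PiTensorProduct.tprod R (Fin.cons (φ a) b) := by
  rw [twistedRotation_tprod]
  refine congrArg (PiTensorProduct.tprod R) (funext fun i ↦ ?_)
  cases i using Fin.cases with
  | zero => simp [zero_sub_one_eq_last, -zero_sub]
  | succ i => simp [succ_sub_one_eq_castSucc]

lemma twistedRotation_pow_tprod (φ : Module.End R A) (b : Fin (m + 1) → A) {j : ℕ}
    (hj : j ≤ m + 1) :
    (twistedRotation φ m ^ j) (PiTensorProduct.tprod R b) =
      PiTensorProduct.tprod R fun i ↦
        (if i.val < j then φ else LinearMap.id) (b (i - j • (1 : Fin (m + 1)))) := by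
  induction j with
  | zero => simp
  | succ j ih =>
    rw [pow_succ', Module.End.mul_apply, ih (by lia), twistedRotation_tprod]
    refine congrArg (PiTensorProduct.tprod R) (funext fun i ↦ ?_)
    rw [succ_nsmul', ← sub_sub]
    cases i using Fin.cases with
    | zero => simp [zero_sub_one_eq_last, -zero_sub, (Nat.le_of_lt_succ hj).not_gt]
    | succ i => simp [succ_sub_one_eq_castSucc]

lemma twistedRotation_pow_succ (φ : Module.End R A) (m : ℕ) :
    twistedRotation φ m ^ (m + 1) = PiTensorProduct.map fun _ ↦ φ := by
  ext b
  have card_nsmul : (m + 1) • (1 : Fin (m + 1)) = 0 := by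
    simpa using card_nsmul_eq_zero' (G := Fin (m + 1)) (x := 1)
  refine (twistedRotation_pow_tprod φ b le_rfl).trans ?_
  simp only [compMultilinearMap_apply, Fin.is_lt, if_true, PiTensorProduct.map_tprod]
  exact congrArg (PiTensorProduct.tprod R) (funext fun i ↦ by rw [card_nsmul, sub_zero])

lemma isOfFinOrder_twistedRotation {φ : Module.End R A} (hφ : IsOfFinOrder φ) (m : ℕ) :
    IsOfFinOrder (twistedRotation φ m) := by
  refine IsOfFinOrder.of_pow (n := m + 1) ?_ m.succ_ne_zero
  rw [twistedRotation_pow_succ]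
  obtain ⟨n, hn, hφn⟩ := isOfFinOrder_iff_pow_eq_one.1 hφ
  refine isOfFinOrder_iff_pow_eq_one.2 ⟨n, hn, ?_⟩
  rw [← PiTensorProduct.map_pow, show (fun _ : Fin (m + 1) ↦ φ) ^ n = 1 from funext fun _ ↦ hφn]
  exact PiTensorProduct.map_one

end TensorPower

section IteratedComul

lemma toConv_algHom_comp_eq_convMul {R C A B : Type*} [CommSemiring R] [AddCommMonoid C]
    [Module R C] [CoalgebraStruct R C] [Semiring A] [Algebra R A] [Semiring B] [Algebra R B]
    (χ : A →ₐ[R] B) {F f g : C →ₗ[R] A} (h : toConv F = toConv f * toConv g) :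
    toConv (χ.toLinearMap ∘ₗ F) =
      toConv (χ.toLinearMap ∘ₗ f) * toConv (χ.toLinearMap ∘ₗ g) := by
  have distrib := algHom_comp_convMul_distrib χ (toConv f) (toConv g)
  rw [← h] at distrib
  exact WithConv.ext distrib

variable (R H : Type*) [CommSemiring R] [Semiring H]

/-- The iterated comultiplication `h ↦ h₁ ⊗ ⋯ ⊗ hₘ`, equal to the counit for `m = 0`. -/
noncomputable def iteratedComul [Bialgebra R H] : (m : ℕ) → H →ₐ[R] ⨂[R]^m H
  | 0 => (Algebra.ofId R _).comp (Bialgebra.counitAlgHom R H)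
  | m + 1 =>
    (Algebra.TensorProduct.lift (snocOne.comp (iteratedComul m)) (single (Fin.last m))
      fun x y ↦ commute_snocOne_single_last (iteratedComul m x) y).comp (Bialgebra.comulAlgHom R H)

variable {R H} in
lemma iteratedComul_succ_apply [Bialgebra R H] (m : ℕ) (h : H) :
    iteratedComul R H (m + 1) h = ∑ i ∈ (ℛ R h).index,
      snocOne (iteratedComul R H m ((ℛ R h).left i)) *
        single (Fin.last m) ((ℛ R h).right i) := by
  rw [iteratedComul, AlgHom.comp_apply, Bialgebra.comulAlgHom_apply, ← (ℛ R h).eq, map_sum]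
  exact Finset.sum_congr rfl fun i _ ↦ Algebra.TensorProduct.lift_tmul ..

lemma toConv_iteratedComul_succ [Bialgebra R H] (m : ℕ) :
    toConv (iteratedComul R H (m + 1)).toLinearMap =
      toConv (snocOne.comp (iteratedComul R H m)).toLinearMap *
        toConv (single (Fin.last m)).toLinearMap := by
  refine WithConv.ext (LinearMap.ext fun h ↦ ?_)
  rw [(ℛ R h).convMul_apply]
  exact iteratedComul_succ_apply m h

lemma toConv_iteratedComul_succ' [Bialgebra R H] (m : ℕ) :
    toConv (iteratedComul R H (m + 1)).toLinearMap =
      toConv (single 0).toLinearMap * toConv (consOne.comp (iteratedComul R H m)).toLinearMap := by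
  induction m with
  | zero =>
    rw [toConv_iteratedComul_succ]
    have comp_eq (χ : ⨂[R]^0 H →ₐ[R] ⨂[R]^1 H) :
        toConv (χ.comp (iteratedComul R H 0)).toLinearMap = 1 := by
      refine WithConv.ext (LinearMap.ext fun h ↦ ?_)
      exact χ.commutes _
    rw [comp_eq, comp_eq, one_mul, mul_one]
    rfl
  | succ m ih =>
    have comp_consOne := toConv_algHom_comp_eq_convMul consOne (toConv_iteratedComul_succ R H m)
    have comp_snocOne := toConv_algHom_comp_eq_convMul snocOne ih
    simp only [← AlgHom.comp_toLinearMap, consOne_comp_single, snocOne_comp_single,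
      ← AlgHom.comp_assoc, Fin.succ_last, Fin.castSucc_zero] at comp_consOne comp_snocOne
    rw [toConv_iteratedComul_succ, comp_consOne, comp_snocOne, mul_assoc, consOne_comp_snocOne]

lemma multiMul_iteratedComul [Bialgebra R H] (m : ℕ) (h : H) :
    multiMul R H m (iteratedComul R H m h) = sweedlerPower R H m h := by
  induction m generalizing h with
  | zero =>
    change multiMul R H 0 (algebraMap R _ (counit h)) = algebraMap R H (counit h)
    simp [Algebra.algebraMap_eq_smul_one, PiTensorProduct.one_def]
  | succ m ih =>
    rw [iteratedComul_succ_apply, map_sum, sweedlerPower, LinearMap.comp_apply,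
      LinearMap.comp_apply, ← (ℛ R h).eq, map_sum, map_sum]
    simp [multiMul_snocOne_mul_single_last, ih]

variable [HopfAlgebra R H]

/-- The map `b₁ ⊗ ⋯ ⊗ bₘ ⊗ h ↦ (b₁ ⊗ ⋯ ⊗ bₘ) Δ(S h)`, where `Δ` is the iterated comultiplication.
It exhibits `H^{⊗m}` as the coinvariants `H^{⊗(m+1)} ⊗_H R` of the diagonal action of `H`. -/
noncomputable def diagonalCoinvariants (m : ℕ) : ⨂[R]^(m + 1) H →ₗ[R] ⨂[R]^m H :=
  PiTensorProduct.lift (((LinearMap.mul R (⨂[R]^m H)).compl₂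
    ((iteratedComul R H m).toLinearMap ∘ₗ antipode R)).compMultilinearMap
      (PiTensorProduct.tprod R)).uncurryRight

variable {R H}

lemma diagonalCoinvariants_snocOne_mul_single_last {m : ℕ} (w : ⨂[R]^m H) (h : H) :
    diagonalCoinvariants R H m (snocOne w * single (Fin.last m) h) =
      w * iteratedComul R H m (antipode R h) := by
  have : diagonalCoinvariants R H m ∘ₗ mulRight R (single (Fin.last m) h) ∘ₗ
      snocOne.toLinearMap = mulRight R (iteratedComul R H m (antipode R h)) := by
    ext b
    simp only [compMultilinearMap_apply, LinearMap.comp_apply, AlgHom.toLinearMap_apply,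
      mulRight_apply, snocOne_tprod_mul_single_last]
    simp [diagonalCoinvariants]
  exact LinearMap.congr_fun this w

@[simp] lemma diagonalCoinvariants_snocOne {m : ℕ} (w : ⨂[R]^m H) :
    diagonalCoinvariants R H m (snocOne w) = w := by
  simpa using diagonalCoinvariants_snocOne_mul_single_last w 1

lemma diagonalCoinvariants_mul_iteratedComul {m : ℕ} (d : ⨂[R]^(m + 1) H) (h : H) :
    diagonalCoinvariants R H m (d * iteratedComul R H (m + 1) h) =
      counit (R := R) h • diagonalCoinvariants R H m d := by
  have : diagonalCoinvariants R H m ∘ₗ mulRight R (iteratedComul R H (m + 1) h) =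
      counit (R := R) h • diagonalCoinvariants R H m := by
    refine tensorPower_hom_ext fun b a ↦ ?_
    have cancel : ∑ i ∈ (ℛ R h).index, iteratedComul R H m ((ℛ R h).left i) *
        iteratedComul R H m (antipode R ((ℛ R h).right i)) =
          algebraMap R _ (counit h) := by
      simp only [← map_mul, ← map_sum, sum_mul_antipode_eq_algebraMap_counit, AlgHom.commutes]
    rw [LinearMap.comp_apply, LinearMap.smul_apply, mulRight_apply,
      ← snocOne_tprod_mul_single_last, iteratedComul_succ_apply, Finset.mul_sum, map_sum]
    simp only [snocOne_mul_single_last_mul, diagonalCoinvariants_snocOne_mul_single_last,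
      antipode_mul_antidistrib]
    calc _ = PiTensorProduct.tprod R b * (∑ i ∈ (ℛ R h).index,
            iteratedComul R H m ((ℛ R h).left i) *
              iteratedComul R H m (antipode R ((ℛ R h).right i))) *
          iteratedComul R H m (antipode R a) := by
          simp only [Finset.mul_sum, Finset.sum_mul, map_mul, mul_assoc]
      _ = _ := by rw [cancel, ← Algebra.commutes, mul_assoc, ← Algebra.smul_def]
  exact LinearMap.congr_fun this d

lemma diagonalCoinvariants_mul_consOne_iteratedComul {m : ℕ} (d : ⨂[R]^(m + 1) H) (h : H) :
    diagonalCoinvariants R H m (d * consOne (iteratedComul R H m h)) =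
      diagonalCoinvariants R H m (d * single 0 (antipode R h)) := by
  have consOne_eq : toConv (consOne.comp (iteratedComul R H m)).toLinearMap =
      toConv ((single 0).toLinearMap ∘ₗ antipode R) *
        toConv (iteratedComul R H (m + 1)).toLinearMap := by
    rw [toConv_iteratedComul_succ', ← mul_assoc, algHom_comp_antipode_convMul, one_mul]
  have expand : consOne (iteratedComul R H m h) = ∑ i ∈ (ℛ R h).index,
      single 0 (antipode R ((ℛ R h).left i)) * iteratedComul R H (m + 1) ((ℛ R h).right i) :=
    (LinearMap.congr_fun (congrArg ofConv consOne_eq) h).trans ((ℛ R h).convMul_apply _ _)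
  calc _ = ∑ i ∈ (ℛ R h).index, counit (R := R) ((ℛ R h).right i) •
        diagonalCoinvariants R H m (d * single 0 (antipode R ((ℛ R h).left i))) := by
        simp only [expand, Finset.mul_sum, map_sum, ← mul_assoc,
          diagonalCoinvariants_mul_iteratedComul]
    _ = diagonalCoinvariants R H m (d * single 0 (antipode R
          (∑ i ∈ (ℛ R h).index, counit (R := R) ((ℛ R h).right i) • (ℛ R h).left i))) := by
        simp only [map_sum, map_smul, Finset.mul_sum, mul_smul_comm]
    _ = _ := by
        have counit_right : ∑ i ∈ (ℛ R h).index,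
            counit (R := R) ((ℛ R h).right i) • (ℛ R h).left i = h := by
          simpa only [map_sum, TensorProduct.rid_tmul, one_smul] using
            congrArg (TensorProduct.rid R H) (sum_tmul_counit_eq (ℛ R h))
        rw [counit_right]

variable (R H) in
/-- The paracyclic operator `b₁ ⊗ ⋯ ⊗ bₘ ↦ (1 ⊗ b₁ ⊗ ⋯ ⊗ bₘ₋₁) Δ(S bₘ)` on `H^{⊗m}`. -/
noncomputable def paracyclic (m : ℕ) : Module.End R (⨂[R]^m H) :=
  diagonalCoinvariants R H m ∘ₗ consOne.toLinearMap

lemma paracyclic_comp_diagonalCoinvariants (m : ℕ) :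
    paracyclic R H m ∘ₗ diagonalCoinvariants R H m =
      diagonalCoinvariants R H m ∘ₗ twistedRotation (antipode R ∘ₗ antipode R) m := by
  refine tensorPower_hom_ext fun b h ↦ ?_
  calc _ = diagonalCoinvariants R H m (consOne (PiTensorProduct.tprod R b *
        iteratedComul R H m (antipode R h))) := by
        rw [LinearMap.comp_apply, ← snocOne_tprod_mul_single_last,
          diagonalCoinvariants_snocOne_mul_single_last]
        rfl
    _ = diagonalCoinvariants R H m (consOne (PiTensorProduct.tprod R b) *
        single 0 (antipode R (antipode R h))) := by
        rw [map_mul, diagonalCoinvariants_mul_consOne_iteratedComul]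
    _ = _ := by
        rw [consOne_tprod_mul_single_zero, LinearMap.comp_apply, twistedRotation_tprod_snoc]
        rfl

lemma isOfFinOrder_paracyclic (h : IsOfFinOrder (antipode R ∘ₗ antipode R : Module.End R H))
    (m : ℕ) : IsOfFinOrder (paracyclic R H m) := by
  obtain ⟨n, hn, hpow⟩ := isOfFinOrder_iff_pow_eq_one.1 (isOfFinOrder_twistedRotation h m)
  refine isOfFinOrder_iff_pow_eq_one.2 ⟨n, hn, LinearMap.ext fun w ↦ ?_⟩
  have := LinearMap.congr_fun (Module.End.commute_pow_left_of_commute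
    (paracyclic_comp_diagonalCoinvariants (R := R) (H := H) m) n) (snocOne w)
  simpa [hpow] using this

end IteratedComul

section Trace

lemma sum_prod_coord_mul {R A ι : Type*} [CommSemiring R] [Semiring A] [Algebra R A] [Fintype ι]
    (b : Module.Basis ι R A) (m : ℕ) (a : A) (t : Fin (m + 1) → A) (l : ι) :
    ∑ f : Fin m → ι, ∏ j : Fin (m + 1),
        b.coord ((Fin.snoc f l : Fin (m + 1) → ι) j)
          ((Fin.cons a (b ∘ f) : Fin (m + 1) → A) j * t j) =
      b.coord l (a * (List.ofFn t).prod) := by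
  induction m generalizing a with
  | zero => simp [Fin.snoc]
  | succ m ih =>
    rw [← (Fin.consEquiv (fun _ : Fin (m + 1) ↦ ι)).sum_comp, Fintype.sum_prod_type]
    have comp_cons (i : ι) (f : Fin m → ι) :
        b ∘ (Fin.cons i f : Fin (m + 1) → ι) = Fin.cons (b i) (b ∘ f) := by
      ext j; cases j using Fin.cases <;> simp
    simp only [Fin.consEquiv, Equiv.coe_fn_mk, comp_cons, Fin.prod_univ_succ (n := m + 1),
      Fin.cons_zero, Fin.cons_succ, ← Fin.cons_snoc_eq_snoc_cons, ← Finset.mul_sum,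
      fun i ↦ ih (b i) (fun j ↦ t j.succ)]
    rw [List.ofFn_succ (f := t), List.prod_cons, ← mul_assoc]
    conv_rhs => rw [← b.sum_repr (a * t 0), Finset.sum_mul, map_sum]
    simp

lemma trace_consOne_comp {R A : Type*} [CommRing R] [Ring A] [Algebra R A] [Module.Free R A]
    [Module.Finite R A] {m : ℕ} (E : ⨂[R]^(m + 1) A →ₗ[R] ⨂[R]^m A) (G : A →ₗ[R] ⨂[R]^m A)
    (hE : ∀ w a, E (snocOne w * single (Fin.last m) a) = w * G a) :
    trace R (⨂[R]^(m + 1) A) (consOne.toLinearMap ∘ₗ E) = trace R A (multiMul R A m ∘ₗ G) := by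
  classical
  let ι := Module.Free.ChooseBasisIndex R A
  let b := Module.Free.chooseBasis R A
  let B := Basis.piTensorProduct fun _ : Fin (m + 1) ↦ b
  have contract (l : ι) (x : ⨂[R]^(m + 1) A) :
      ∑ f : Fin m → ι, B.coord (Fin.snoc f l) (consOne (PiTensorProduct.tprod R (b ∘ f)) * x) =
        b.coord l (multiMul R A (m + 1) x) := by
    have : ∑ f : Fin m → ι, B.coord (Fin.snoc f l) ∘ₗ
        mulLeft R (consOne (PiTensorProduct.tprod R (b ∘ f))) =
          b.coord l ∘ₗ multiMul R A (m + 1) := by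
      refine PiTensorProduct.ext (MultilinearMap.ext fun t ↦ ?_)
      simpa [B, Basis.piTensorProduct_repr_tprod_apply] using sum_prod_coord_mul b m 1 t l
    simpa using LinearMap.congr_fun this x
  rw [trace_eq_matrix_trace R B, trace_eq_matrix_trace R b, Matrix.trace, Matrix.trace,
    ← (Fin.snocEquiv fun _ : Fin (m + 1) ↦ ι).sum_comp, Fintype.sum_prod_type]
  refine Finset.sum_congr rfl fun l _ ↦ ?_
  have B_snoc (f : Fin m → ι) : B (Fin.snoc f l) =
      snocOne (PiTensorProduct.tprod R (b ∘ f)) * single (Fin.last m) (b l) := by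
    rw [snocOne_tprod_mul_single_last, Basis.piTensorProduct_apply]
    refine congrArg (PiTensorProduct.tprod R) (funext fun j ↦ ?_)
    cases j using Fin.lastCases <;> simp
  simp only [Fin.snocEquiv, Equiv.coe_fn_mk, Matrix.diag_apply, toMatrix_apply,
    LinearMap.comp_apply, AlgHom.toLinearMap_apply]
  refine Eq.trans ?_ ((contract l (consOne (G (b l)))).trans ?_)
  · simp only [B_snoc, hE, map_mul, Module.Basis.coord_apply]
  · rw [multiMul_consOne, Module.Basis.coord_apply]

lemma trace_paracyclic (R : Type*) {H : Type*} [CommRing R] [Ring H] [HopfAlgebra R H]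
    [Module.Free R H] [Module.Finite R H] (m : ℕ) :
    trace R (⨂[R]^m H) (paracyclic R H m) = trace R H (antipode R ∘ₗ sweedlerPower R H m) := by
  have multiMul_comp : multiMul R H m ∘ₗ (iteratedComul R H m).toLinearMap =
      sweedlerPower R H m := LinearMap.ext (multiMul_iteratedComul R H m)
  have (n : ℕ) : Module.Free R (⨂[R]^n H) :=
    .of_basis (Basis.piTensorProduct fun _ ↦ Module.Free.chooseBasis R H)
  calc _ = trace R (⨂[R]^(m + 1) H) (consOne.toLinearMap ∘ₗ diagonalCoinvariants R H m) :=
        trace_comp_comm' _ _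
    _ = trace R H (multiMul R H m ∘ₗ (iteratedComul R H m).toLinearMap ∘ₗ antipode R) :=
        trace_consOne_comp _ _ diagonalCoinvariants_snocOne_mul_single_last
    _ = trace R H (sweedlerPower R H m ∘ₗ antipode R) := by
        rw [← LinearMap.comp_assoc, multiMul_comp]
    _ = _ := trace_comp_comm' _ _

end Trace

section Integrality

lemma isIntegral_trace {S k V : Type*} [CommRing S] [Field k] [Algebra S k] [AddCommGroup V]
    [Module k V] [FiniteDimensional k V] [Module S V] [IsScalarTower S k V] {G : Module.End k V}
    (hG : IsIntegral S G) : IsIntegral S (trace k V G) := by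
  let K := AlgebraicClosure k
  obtain ⟨q, hq_monic, hq⟩ := hG
  have baseChange_root : Polynomial.aeval (G.baseChange K) q = 0 := by
    have := Polynomial.aeval_algHom_apply
      ((Module.End.baseChangeHom k K V).restrictScalars S) G q
    rw [show Polynomial.aeval G q = 0 from hq, map_zero] at this
    exact this
  have eigenvalue_isIntegral {μ : K} (hμ : Module.End.HasEigenvalue (G.baseChange K) μ) :
      IsIntegral S μ := by
    obtain ⟨v, hv⟩ := hμ.exists_hasEigenvector
    have := Module.End.aeval_apply_of_hasEigenvector (p := q.map (algebraMap S K)) hv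
    rw [Polynomial.aeval_map_algebraMap, baseChange_root, LinearMap.zero_apply, eq_comm,
      smul_eq_zero_iff_left hv.2, Polynomial.eval_map] at this
    exact ⟨q, hq_monic, this⟩
  rw [← isIntegral_algebraMap_iff (algebraMap k K).injective, ← trace_baseChange,
    Module.End.trace_eq_sum_roots_charpoly_of_splits (IsAlgClosed.splits _)]
  refine IsIntegral.multiset_sum fun μ hμ ↦ eigenvalue_isIntegral ?_
  exact Module.End.hasEigenvalue_iff_isRoot_charpoly _ _ |>.2 (Polynomial.isRoot_of_mem_roots hμ)

lemma isIntegral_of_isOfFinOrder (R : Type*) {A : Type*} [CommRing R] [Ring A] [Algebra R A] {x : A}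
    (hx : IsOfFinOrder x) : IsIntegral R x := by
  obtain ⟨n, n_pos, hn⟩ := isOfFinOrder_iff_pow_eq_one.1 hx
  exact .of_pow n_pos (hn ▸ isIntegral_one)

theorem isIntegral_trace_antipode_comp_sweedlerPower (k H : Type*) [Field k] [Ring H]
    [HopfAlgebra k H] [FiniteDimensional k H] (n : ℕ) :
    IsIntegral ℤ (trace k H (antipode k ∘ₗ sweedlerPower k H n)) := by
  rw [← trace_paracyclic k n]
  exact isIntegral_trace <| isIntegral_of_isOfFinOrder ℤ <|
    isOfFinOrder_paracyclic (isOfFinOrder_antipodeSq k H) n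

end Integrality

section Periodicity

open Polynomial

lemma isOfFinOrder_of_isIntegral_of_isUnit {κ A : Type*} [CommRing κ] [Finite κ] [Ring A]
    [Algebra κ A] {x : A} (hx : IsIntegral κ x) (hu : IsUnit x) : IsOfFinOrder x := by
  obtain ⟨u, rfl⟩ := hu
  rw [Units.isOfFinOrder_val]
  by_contra not_finite
  have pow_injective := injective_pow_iff_not_isOfFinOrder.2 not_finite
  have : Module.Finite κ (Algebra.adjoin κ {(u : A)}) :=
    Module.Finite.iff_fg.2 hx.fg_adjoin_singleton
  have : Finite (Algebra.adjoin κ {(u : A)}) := Module.finite_of_finite κ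
  refine not_injective_infinite_finite (fun n : ℕ ↦
    (⟨(u : A) ^ n, pow_mem (Algebra.self_mem_adjoin_singleton κ _) n⟩ :
      Algebra.adjoin κ {(u : A)})) fun m n hmn ↦ pow_injective (Units.ext ?_)
  simpa using hmn

/-- The left shift `(a₀, a₁, …) ↦ (a₁, a₂, …)` on sequences. A polynomial in the shift annihilates
a sequence exactly when its coefficients give a linear recurrence satisfied by the sequence. -/
def shift (R : Type*) [Semiring R] : Module.End R (ℕ → R) :=
  LinearMap.funLeft R R Nat.succ

lemma shift_pow_apply {R : Type*} [Semiring R] (i : ℕ) (a : ℕ → R) (n : ℕ) :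
    (shift R ^ i) a n = a (n + i) := by
  induction i generalizing n with
  | zero => rfl
  | succ i ih =>
    rw [pow_succ', Module.End.mul_apply, shift, funLeft_apply, ← shift, ih,
      Nat.succ_add_eq_add_succ]

lemma aeval_shift_apply {R : Type*} [CommSemiring R] (q : R[X]) (a : ℕ → R) (n : ℕ) :
    aeval (shift R) q a n = q.sum fun i c ↦ c * a (n + i) := by
  simp [aeval_eq_sum_range, sum_over_range, LinearMap.sum_apply, shift_pow_apply]

lemma aeval_shift_orbit {R V : Type*} [CommSemiring R] [AddCommMonoid V] [Module R V]
    (f : Module.End R V) (v : V) (ψ : V →ₗ[R] R) (q : R[X]) :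
    aeval (shift R) q (fun n ↦ ψ ((f ^ n) v)) = fun n ↦ ψ ((f ^ n) (aeval f q v)) := by
  ext n
  simp [aeval_eq_sum_range, LinearMap.sum_apply, shift_pow_apply, pow_add]

lemma exists_periodic_of_aeval_shift_eq_zero (κ : Type*) {F : Type*} [CommRing κ] [Finite κ]
    [Field F] [Algebra κ F] [Algebra.IsIntegral κ F] {q : F[X]} (hq : q.coeff 0 ≠ 0) {a : ℕ → F}
    (ha : aeval (shift F) q a = 0) : ∃ T, 0 < T ∧ ∀ n, a (n + T) = a n := by
  have root_isIntegral : IsIntegral κ (AdjoinRoot.root q) :=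
    isIntegral_trans _ (AdjoinRoot.isIntegral_root (by rintro rfl; simp at hq))
  have root_isUnit : IsUnit (AdjoinRoot.root q) := by
    have := congrArg (AdjoinRoot.mk q) (divX_mul_X_add q)
    rw [AdjoinRoot.mk_self, map_add, map_mul, AdjoinRoot.mk_X, AdjoinRoot.mk_C] at this
    have coeff_isUnit : IsUnit (AdjoinRoot.of q (q.coeff 0)) := (isUnit_iff_ne_zero.2 hq).map _
    rw [← neg_eq_of_add_eq_zero_right this, IsUnit.neg_iff] at coeff_isUnit
    exact isUnit_of_mul_isUnit_right coeff_isUnit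
  obtain ⟨T, T_pos, hT⟩ := isOfFinOrder_iff_pow_eq_one.1
    (isOfFinOrder_of_isIntegral_of_isUnit root_isIntegral root_isUnit)
  obtain ⟨r, hr⟩ : q ∣ X ^ T - 1 := by
    rw [← AdjoinRoot.mk_eq_zero]
    simp [hT]
  refine ⟨T, T_pos, fun n ↦ ?_⟩
  have := congrArg (fun s ↦ aeval (shift F) s a n) hr
  simpa [mul_comm q, ha, shift_pow_apply, sub_eq_zero] using this

lemma exists_aeval_shift_eq_zero_descent {F k : Type*} [Field F] [CommRing k] [Algebra F k]
    {q : k[X]} (hq : q.coeff 0 ≠ 0) {a : ℕ → F}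
    (ha : aeval (shift k) q (fun n ↦ algebraMap F k (a n)) = 0) :
    ∃ q' : F[X], q'.coeff 0 ≠ 0 ∧ aeval (shift F) q' a = 0 := by
  obtain ⟨π, hπ⟩ : ∃ π : k →ₗ[F] F, π (q.coeff 0) ≠ 0 := by
    simpa using (Module.forall_dual_apply_eq_zero_iff F (q.coeff 0)).not.2 hq
  let q' : F[X] := ∑ i ∈ q.support, monomial i (π (q.coeff i))
  have coeff_q' (i : ℕ) : q'.coeff i = π (q.coeff i) := by
    simp +contextual [q', coeff_monomial]
  refine ⟨q', by rwa [coeff_q'], funext fun n ↦ ?_⟩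
  have sum_zero := congrArg π (congrFun ha n)
  have support_subset : q'.support ⊆ q.support := fun i ↦ by
    simp only [mem_support_iff, coeff_q']
    exact mt fun h ↦ by rw [h, map_zero]
  rw [aeval_shift_apply, sum_def, Finset.sum_subset support_subset (by simp +contextual)]
  rw [aeval_shift_apply, sum_def, map_sum, Pi.zero_apply, map_zero] at sum_zero
  rw [Pi.zero_apply, ← sum_zero]
  refine Finset.sum_congr rfl fun i _ ↦ ?_
  rw [coeff_q', mul_comm, mul_comm (q.coeff i), ← Algebra.smul_def, map_smul, smul_eq_mul]

lemma coeff_zero_charpoly_ne_zero {k V : Type*} [Field k] [AddCommGroup V] [Module k V]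
    [FiniteDimensional k V] {f : Module.End k V} (hf : Function.Injective f) :
    f.charpoly.coeff 0 ≠ 0 := by
  intro h
  have := (LinearMap.isUnit_iff_isUnit_det f).1 ((Module.End.isUnit_iff f).2
    ⟨hf, injective_iff_surjective.1 hf⟩)
  rw [det_eq_sign_charpoly_coeff, h, mul_zero] at this
  exact not_isUnit_zero this

theorem exists_periodic_of_isIntegral_orbit (κ : Type*) {k V : Type*} [Field κ] [Finite κ]
    [Field k] [Algebra κ k] [AddCommGroup V] [Module k V] [FiniteDimensional k V]
    {f : Module.End k V} (hf : Function.Injective f) (v : V) (ψ : V →ₗ[k] k)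
    (h_int : ∀ n, IsIntegral κ (ψ ((f ^ n) v))) :
    ∃ T, 0 < T ∧ ∀ n, ψ ((f ^ (n + T)) v) = ψ ((f ^ n) v) := by
  let F := algebraicClosure κ k
  let a (n : ℕ) : F := ⟨ψ ((f ^ n) v), mem_algebraicClosure_iff.2 (h_int n).isAlgebraic⟩
  have recurrence : aeval (shift k) f.charpoly (fun n ↦ algebraMap F k (a n)) = 0 := by
    refine (aeval_shift_orbit f v ψ f.charpoly).trans (funext fun n ↦ ?_)
    simp [aeval_self_charpoly]
  obtain ⟨q, q_coeff, hq⟩ :=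
    exists_aeval_shift_eq_zero_descent (coeff_zero_charpoly_ne_zero hf) recurrence
  obtain ⟨T, T_pos, hT⟩ := exists_periodic_of_aeval_shift_eq_zero κ q_coeff hq
  exact ⟨T, T_pos, fun n ↦ congrArg Subtype.val (hT n)⟩

end Periodicity

section ConvolutionById

variable (R H : Type*) [CommSemiring R] [Semiring H]

/-- Right convolution with the identity, `f ↦ f * id`; the Sweedler powers form an orbit of it. -/
noncomputable def convId [Bialgebra R H] : Module.End R (H →ₗ[R] H) :=
  (lcomp R H comul) ∘ₗ (llcomp R (H ⊗[R] H) (H ⊗[R] H) H (mul' R H)) ∘ₗ (rTensorHom H)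

lemma toConv_convId [Bialgebra R H] (f : H →ₗ[R] H) :
    toConv (convId R H f) = toConv f * toConv LinearMap.id := rfl

lemma convId_pow_sweedlerPower_zero [Bialgebra R H] (n : ℕ) :
    (convId R H ^ n) (sweedlerPower R H 0) = sweedlerPower R H n := by
  induction n with
  | zero => rfl
  | succ n ih => rw [pow_succ', Module.End.mul_apply, ih]; rfl

lemma convId_injective [HopfAlgebra R H] : Function.Injective (convId R H) := by
  intro f g h
  have := congrArg (fun t ↦ toConv t * toConv (antipode R)) h
  simpa [toConv_convId, mul_assoc] using this

end ConvolutionById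

end HopfIndicator

/-- For a finite-dimensional Hopf algebra `H` over a field `k` of positive
characteristic `p`, the indicator sequence `ν_n(H) = Tr(S ∘ P^(n-1))` is periodic: there is
`T > 0` with `Tr(S ∘ P^(n+T)) = Tr(S ∘ P^(n))` for all `n`. -/
theorem indicators_periodic_positive_char
    (k H : Type*) [Field k] [Ring H] [HopfAlgebra k H] [FiniteDimensional k H]
    (p : ℕ) (hp : 0 < p) [CharP k p] :
    ∃ T : ℕ, 0 < T ∧ ∀ n : ℕ,
      LinearMap.trace k H (HopfAlgebra.antipode (R := k) ∘ₗ sweedlerPower k H (n + T)) =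
        LinearMap.trace k H (HopfAlgebra.antipode (R := k) ∘ₗ sweedlerPower k H n) := by
  have : Fact p.Prime := ⟨(CharP.char_is_prime_or_zero k p).resolve_right hp.ne'⟩
  let : Algebra (ZMod p) k := ZMod.algebra k p
  have : IsScalarTower ℤ (ZMod p) k := .of_algebraMap_eq' (RingHom.ext_int _ _)
  open HopfIndicator in
  simpa only [convId_pow_sweedlerPower_zero, LinearMap.comp_apply, LinearMap.llcomp_apply'] using
    exists_periodic_of_isIntegral_orbit (ZMod p) (convId_injective k H) (sweedlerPower k H 0)
      (LinearMap.trace k H ∘ₗ LinearMap.llcomp k H H H (HopfAlgebra.antipode k)) fun n ↦ by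
        rw [convId_pow_sweedlerPower_zero]
        exact (isIntegral_trace_antipode_comp_sweedlerPower k H n).tower_top
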